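/- Every automorphism-invariant module M decomposes as M = X ⊕ Y, where X is quasi-injective, Y is square-free, X and Y are orthogonal, and X and Y are relatively injective. -/

import Mathlib

universe u v w

section Defs

variable {R : Type u} [Ring R]

/-- `N` is an essential submodule of `M`. -/
def EssentialSub {M : Type v} [AddCommGroup M] [Module R M] (N : Submodule R M) : Prop :=
  ∀ K : Submodule R M, K ⊓ N = ⊥ → K = ⊥

/-- `N` is essential in `P` (both submodules of `M`, `N ≤ P`). -/
def EssentialIn {M : Type v} [AddCommGroup M] [Module R M] (N P : Submodule R M) : Prop :=
  N ≤ P ∧ ∀ K : Submodule R M, K ≤ P → K ⊓ N = ⊥ → K = ⊥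

/-- `N` is a closed submodule of `M`: it has no proper essential extension in `M`. -/
def ClosedSub {M : Type v} [AddCommGroup M] [Module R M] (N : Submodule R M) : Prop :=
  ∀ P : Submodule R M, EssentialIn N P → N = P

/-- `i : M →ₗ[R] E` realizes `E` as an injective hull of `M`. -/
structure IsInjectiveHull {M : Type v} {E : Type w} [AddCommGroup M] [Module R M]
    [AddCommGroup E] [Module R E] (i : M →ₗ[R] E) : Prop where
  inj : Function.Injective i
  injE : Module.Injective R E
  ess : EssentialSub (LinearMap.range i)

/-- `M` is invariant under every automorphism of the hull `E` given by `i`. -/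
def HullAutInv {M : Type v} {E : Type w} [AddCommGroup M] [Module R M]
    [AddCommGroup E] [Module R E] (i : M →ₗ[R] E) : Prop :=
  ∀ g : E ≃ₗ[R] E, ∀ m : M, g (i m) ∈ LinearMap.range i

end Defs

/-- `M` is automorphism-invariant: invariant under all automorphisms of its injective hull. -/
def AutInvariant (R : Type u) [Ring R] (M : Type v) [AddCommGroup M] [Module R M] : Prop :=
  ∀ (E : Type v) [AddCommGroup E] [Module R E] (i : M →ₗ[R] E),
    IsInjectiveHull i → HullAutInv i

/-- Every monomorphism from a submodule of `M` into `M` extends to an endomorphism of `M`. -/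
def PseudoInjective (R : Type u) [Ring R] (M : Type v) [AddCommGroup M] [Module R M] : Prop :=
  ∀ (A : Submodule R M) (f : A →ₗ[R] M), Function.Injective f →
    ∃ g : M →ₗ[R] M, ∀ a : A, g a = f a

/-- Every homomorphism from a submodule of `M` into `M` extends to an endomorphism of `M`. -/
def QuasiInjective (R : Type u) [Ring R] (M : Type v) [AddCommGroup M] [Module R M] : Prop :=
  ∀ (A : Submodule R M) (f : A →ₗ[R] M), ∃ g : M →ₗ[R] M, ∀ a : A, g a = f a

/-- `X` is `Y`-injective. -/
def RelInjective (R : Type u) [Ring R] (X : Type v) (Y : Type w) [AddCommGroup X] [Module R X]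
    [AddCommGroup Y] [Module R Y] : Prop :=
  ∀ (A : Submodule R Y) (f : A →ₗ[R] X), ∃ g : Y →ₗ[R] X, ∀ a : A, g a = f a

/-- `M` contains no direct sum of two nonzero isomorphic submodules. -/
def SquareFreeMod (R : Type u) [Ring R] (M : Type v) [AddCommGroup M] [Module R M] : Prop :=
  ∀ (A B : Submodule R M), A ⊓ B = ⊥ → Nonempty (A ≃ₗ[R] B) → A = ⊥

/-- `X` and `Y` have no nonzero isomorphic submodules. -/
def OrthogonalMod (R : Type u) [Ring R] (X : Type v) (Y : Type w) [AddCommGroup X] [Module R X]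
    [AddCommGroup Y] [Module R Y] : Prop :=
  ∀ (A : Submodule R X) (B : Submodule R Y), Nonempty (A ≃ₗ[R] B) → A = ⊥

/-- No nonzero element of `M` is annihilated by an essential (right) ideal of `R`. -/
def NonsingularMod (R : Type u) [Ring R] (M : Type v) [AddCommGroup M] [Module R M] : Prop :=
  ∀ m : M, EssentialSub (LinearMap.ker (LinearMap.toSpanSingleton R M m)) → m = 0

/-!
Take a maximal pair of independent isomorphic submodules `A` and `B ≅ A` of the hull `E`. Then `A`
is closed, hence injective, so `E = A ⊕ B ⊕ C`, and `C` is square-free because a square in `C`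
would enlarge the pair. A maximal monomorphism from a submodule `D` of `C` into `A` splits
`C = D ⊕ Y` with `Y` orthogonal to `A`, and `D` is orthogonal to `Y` since `C` is square-free.

If `n` is an endomorphism of `E` with `n² = 0`, then `1 + n` is an automorphism, so `M` is stable
under `n`. An endomorphism with image in a summand `P` is a sum of such maps and their products as
soon as `P` embeds in a complement of `P`: pass through the second copy of `P`. This applies to `A`,
`B` and `D`, so `M` is stable under every endomorphism with image in `A ⊕ B ⊕ D`, in particular
under the projection onto it. Intersecting with `M` gives the decomposition, and extending maps to
`E` gives the relative injectivity.
-/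

section InjectiveModules

variable {R : Type u} [Ring R] {E P Q : Type w} [AddCommGroup E] [Module R E]
  [AddCommGroup P] [Module R P] [AddCommGroup Q] [Module R Q]

theorem exists_extension_of_injective [Module.Injective R Q] {T : Type v} [AddCommGroup T]
    [Module R T] (j : T →ₗ[R] E) (hj : Function.Injective j) (k : T →ₗ[R] Q) :
    ∃ h : E →ₗ[R] Q, ∀ t, h (j t) = k t := by
  let e := LinearEquiv.ofInjective j hj
  obtain ⟨h, hh⟩ := Module.Injective.out (LinearMap.range j).subtype
    (Submodule.subtype_injective _) (k ∘ₗ e.symm.toLinearMap)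
  exact ⟨h, fun t ↦ by simpa [e] using hh (e t)⟩

theorem exists_leftInverse_of_injective [Module.Injective R P] (φ : P →ₗ[R] E)
    (hφ : Function.Injective φ) : ∃ ρ : E →ₗ[R] P, ρ ∘ₗ φ = LinearMap.id :=
  (exists_extension_of_injective φ hφ LinearMap.id).imp fun _ h ↦ LinearMap.ext h

theorem injective_of_retract [Module.Injective R E] {φ : P →ₗ[R] E} {ρ : E →ₗ[R] P}
    (h : ρ ∘ₗ φ = LinearMap.id) : Module.Injective R P where
  out _ _ _ _ _ _ f hf g := by
    obtain ⟨k, hk⟩ := Module.Injective.out f hf (φ ∘ₗ g)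
    exact ⟨ρ ∘ₗ k, fun x ↦ by simpa [hk] using LinearMap.congr_fun h (g x)⟩

instance injective_prod [Module.Injective R P] [Module.Injective R Q] :
    Module.Injective R (P × Q) where
  out _ _ _ _ _ _ f hf g := by
    obtain ⟨k, hk⟩ := Module.Injective.out f hf (LinearMap.fst R P Q ∘ₗ g)
    obtain ⟨l, hl⟩ := Module.Injective.out f hf (LinearMap.snd R P Q ∘ₗ g)
    exact ⟨k.prod l, fun x ↦ Prod.ext (hk x) (hl x)⟩

theorem injective_of_equiv_prod [Module.Injective R E] (e : E ≃ₗ[R] P × Q) :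
    Module.Injective R P ∧ Module.Injective R Q :=
  ⟨injective_of_retract (φ := e.symm.toLinearMap ∘ₗ LinearMap.inl R P Q)
      (ρ := LinearMap.fst R P Q ∘ₗ e.toLinearMap) (by ext; simp),
    injective_of_retract (φ := e.symm.toLinearMap ∘ₗ LinearMap.inr R P Q)
      (ρ := LinearMap.snd R P Q ∘ₗ e.toLinearMap) (by ext; simp)⟩

end InjectiveModules

theorem nonempty_equiv_prod_ker {R E P : Type*} [Ring R] [AddCommGroup E] [Module R E]
    [AddCommGroup P] [Module R P] {φ : P →ₗ[R] E} {ρ : E →ₗ[R] P} (h : ρ ∘ₗ φ = LinearMap.id) :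
    Nonempty (E ≃ₗ[R] P × LinearMap.ker ρ) := by
  have h' : ∀ p, ρ (φ p) = p := LinearMap.congr_fun h
  let π : E →ₗ[R] LinearMap.ker ρ := (LinearMap.id - φ ∘ₗ ρ).codRestrict _ (by simp [h'])
  refine ⟨.ofLinearMap (ρ.prod π) (φ.coprod (LinearMap.ker ρ).subtype) ?_ ?_⟩
  · ext x <;> simp [π, h']
  · ext x
    simp [π]

section Essential

variable {R : Type u} [Ring R] {U : Type v} {V : Type w} [AddCommGroup U] [Module R U]
  [AddCommGroup V] [Module R V] {A P : Submodule R U}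

theorem EssentialIn.disjoint_of_disjoint (hP : EssentialIn A P) {K : Submodule R U}
    (hK : Disjoint A K) : Disjoint P K :=
  disjoint_iff.2 <| hP.2 _ inf_le_left <| disjoint_iff.1 <|
    hK.symm.mono_left inf_le_right

theorem EssentialIn.disjoint_comap_self (hP : EssentialIn A P) {h : U →ₗ[R] U}
    (hA : Disjoint A (A.comap h)) : Disjoint P (P.comap h) := by
  have hPA : Disjoint P (A.comap h) := hP.disjoint_of_disjoint hA
  have hmap : Disjoint A ((P ⊓ P.comap h).map h) := by
    rw [Submodule.disjoint_def]
    rintro _ hxA ⟨x, hx, rfl⟩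
    rw [Submodule.disjoint_def.1 hPA x hx.1 hxA, map_zero]
  have hPmap : Disjoint P ((P ⊓ P.comap h).map h) := hP.disjoint_of_disjoint hmap
  rw [Submodule.disjoint_def] at hPA hPmap ⊢
  intro x hxP hx
  refine hPA x hxP ?_
  rw [Submodule.mem_comap, hPmap (h x) hx ⟨x, ⟨hxP, hx⟩, rfl⟩]
  exact A.zero_mem

theorem exists_maximal_disjoint {α : Type*} [CompleteLattice α] [IsCompactlyGenerated α] (a : α) :
    ∃ k, Maximal (Disjoint a) k :=
  zorn_le₀ {k | Disjoint a k} fun c hc hchain ↦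
    ⟨sSup c, hchain.directedOn.disjoint_sSup_right.2 hc, fun _ ↦ le_sSup⟩

theorem ClosedSub.exists_retraction [Module.Injective R U] (hA : ClosedSub A) :
    ∃ ρ : U →ₗ[R] A, ρ ∘ₗ A.subtype = LinearMap.id := by
  obtain ⟨K, hAK, hK⟩ := exists_maximal_disjoint A
  have hinj : Function.Injective (A.subtype.coprod K.subtype) := by
    rw [← LinearMap.ker_eq_bot, LinearMap.ker_coprod_of_disjoint_range] <;> simp [hAK]
  obtain ⟨t, ht⟩ := exists_extension_of_injective _ hinj (A.subtype ∘ₗ LinearMap.fst R A K)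
  have htA : ∀ x ∈ A, t x = x := fun x hx ↦ by simpa using ht (⟨x, hx⟩, 0)
  have htK : ∀ x ∈ K, t x = 0 := fun x hx ↦ by simpa using ht (0, ⟨x, hx⟩)
  -- By maximality of `K`, `A` is essential in the image of `t`, so `t` has values in `A`.
  have hrange : A = LinearMap.range t := by
    refine hA _ ⟨fun x hx ↦ ⟨x, htA x hx⟩, fun L hL hLA ↦ ?_⟩
    have hdisj : Disjoint A (L.comap t) := by
      rw [Submodule.disjoint_def]
      intro x hxA hxL
      have hx : x ∈ L ⊓ A := ⟨by simpa [htA x hxA] using hxL, hxA⟩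
      simpa [hLA] using hx
    have hle : L.comap t ≤ K := hK hdisj fun x hx ↦ by simp [htK x hx]
    rw [eq_bot_iff]
    intro l hl
    obtain ⟨x, rfl⟩ := hL hl
    exact htK x (hle hl)
  exact ⟨t.codRestrict A fun x ↦ hrange ▸ ⟨x, rfl⟩, LinearMap.ext fun x ↦ Subtype.ext (htA x x.2)⟩

end Essential

section PartialMaps

variable {R : Type u} [Ring R] {U V : Type*} [AddCommGroup U] [Module R U]
  [AddCommGroup V] [Module R V]

-- A condition on two values at a time passes to unions of chains, hence the shape of `r`.
theorem exists_maximal_linearPMap (r : U → V → U → V → Prop) (hr : r 0 0 0 0) :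
    ∃ f : U →ₗ.[R] V, Maximal (fun f ↦ ∀ x y : f.domain, r x (f x) y (f y)) f := by
  refine (zorn_le_nonempty₀ {f : U →ₗ.[R] V | ∀ x y : f.domain, r x (f x) y (f y)}
    (fun c hc hchain g hg ↦ ?_) ⊥ ?_).imp fun _ ↦ And.right
  · have hdir := hchain.directedOn
    refine ⟨LinearPMap.sSup c hdir, ?_, fun _ ↦ LinearPMap.le_sSup hdir⟩
    rintro ⟨x, hx⟩ ⟨y, hy⟩
    obtain ⟨f₁, hf₁, hx₁⟩ := (LinearPMap.mem_domain_sSup_iff ⟨g, hg⟩ hdir).1 hx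
    obtain ⟨f₂, hf₂, hy₂⟩ := (LinearPMap.mem_domain_sSup_iff ⟨g, hg⟩ hdir).1 hy
    obtain ⟨f, hf, h₁, h₂⟩ := hdir f₁ hf₁ f₂ hf₂
    have hxy := hc hf ⟨x, h₁.1 hx₁⟩ ⟨y, h₂.1 hy₂⟩
    rwa [← LinearPMap.sSup_apply hdir hf, ← LinearPMap.sSup_apply hdir hf] at hxy
  · rintro ⟨x, hx⟩ ⟨y, hy⟩
    obtain rfl : x = 0 := hx
    obtain rfl : y = 0 := hy
    exact hr

variable {p : (U →ₗ.[R] V) → Prop} {f : U →ₗ.[R] V}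

theorem eq_bot_of_maximal (hf : Maximal p f) {N : Submodule R U} (hN : Disjoint f.domain N)
    (g : N →ₗ[R] V) (hp : p (f.sup ⟨N, g⟩ (f.sup_h_of_disjoint ⟨N, g⟩ hN))) : N = ⊥ :=
  have hle := (LinearPMap.right_le_sup f ⟨N, g⟩ _).trans (hf.2 hp (f.left_le_sup _ _))
  hN.eq_bot_of_ge hle.1

theorem exists_add_eq_sup_apply {N : Submodule R U} (hN : Disjoint f.domain N)
    (g : N →ₗ[R] V) (z : (f.sup ⟨N, g⟩ (f.sup_h_of_disjoint ⟨N, g⟩ hN)).domain) :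
    ∃ (x : f.domain) (n : N), (z : U) = x + n ∧
      f.sup ⟨N, g⟩ (f.sup_h_of_disjoint ⟨N, g⟩ hN) z = f x + g n := by
  obtain ⟨x, hx, n, hn, hz⟩ := Submodule.mem_sup.1 z.2
  exact ⟨⟨x, hx⟩, ⟨n, hn⟩, hz.symm, LinearPMap.sup_apply _ ⟨x, hx⟩ ⟨n, hn⟩ z hz⟩

end PartialMaps

theorem closedSub_domain_of_maximal {R : Type u} [Ring R] {U V : Type w} [AddCommGroup U]
    [Module R U] [AddCommGroup V] [Module R V] [Module.Injective R V] {p : (U →ₗ.[R] V) → Prop}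
    {f : U →ₗ.[R] V} (hf : Maximal p f)
    (hess : ∀ P (h : U →ₗ[R] V), EssentialIn f.domain P → f ≤ h.toPMap P → p (h.toPMap P)) :
    ClosedSub f.domain := by
  intro P hP
  obtain ⟨h, hh⟩ := exists_extension_of_injective f.domain.subtype
    (Submodule.subtype_injective _) f.toFun
  have hle : f ≤ h.toPMap P := ⟨hP.1, fun x y hxy ↦ (hh x).symm.trans (congrArg h hxy)⟩
  exact le_antisymm hP.1 (hf.2 (hess P h hP hle) hle).1

section Orthogonality

variable {R : Type u} [Ring R] {M N X Y X₁ X₂ : Type*} [AddCommGroup M] [Module R M]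
  [AddCommGroup N] [Module R N] [AddCommGroup X] [Module R X] [AddCommGroup Y] [Module R Y]
  [AddCommGroup X₁] [Module R X₁] [AddCommGroup X₂] [Module R X₂]

theorem OrthogonalMod.subsingleton (h : OrthogonalMod R X Y) {f : N →ₗ[R] X}
    (hf : Function.Injective f) {g : N →ₗ[R] Y} (hg : Function.Injective g) : Subsingleton N :=
  have hbot : LinearMap.range f = ⊥ :=
    h _ _ ⟨(LinearEquiv.ofInjective f hf).symm.trans (LinearEquiv.ofInjective g hg)⟩
  ⟨fun x y ↦ hf (by simp [LinearMap.range_eq_bot.1 hbot])⟩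

theorem SquareFreeMod.subsingleton (h : SquareFreeMod R M) {f g : N →ₗ[R] M}
    (hf : Function.Injective f) (hg : Function.Injective g)
    (hfg : Disjoint (LinearMap.range f) (LinearMap.range g)) : Subsingleton N :=
  have hbot : LinearMap.range f = ⊥ := h _ _ (disjoint_iff.1 hfg)
    ⟨(LinearEquiv.ofInjective f hf).symm.trans (LinearEquiv.ofInjective g hg)⟩
  ⟨fun x y ↦ hf (by simp [LinearMap.range_eq_bot.1 hbot])⟩

theorem OrthogonalMod.of_forall (h : ∀ (A : Submodule R X) (g : A →ₗ[R] Y),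
    Function.Injective g → Subsingleton A) : OrthogonalMod R X Y :=
  fun A B ⟨e⟩ ↦ Submodule.subsingleton_iff_eq_bot.1 <|
    h A (B.subtype ∘ₗ e.toLinearMap) (B.subtype_injective.comp e.injective)

theorem SquareFreeMod.of_forall (h : ∀ (A : Submodule R M) (g : A →ₗ[R] M),
    Function.Injective g → Disjoint A (LinearMap.range g) → Subsingleton A) :
    SquareFreeMod R M := by
  rintro A B hAB ⟨e⟩
  refine Submodule.subsingleton_iff_eq_bot.1 <| h A (B.subtype ∘ₗ e.toLinearMap)
    (B.subtype_injective.comp e.injective) ?_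
  rwa [LinearEquiv.range_comp, Submodule.range_subtype, disjoint_iff]

theorem OrthogonalMod.symm (h : OrthogonalMod R X Y) : OrthogonalMod R Y X :=
  .of_forall fun A _ hg ↦ h.subsingleton hg A.subtype_injective

theorem OrthogonalMod.of_injective (h : OrthogonalMod R X₁ X₂) {f : X →ₗ[R] X₁}
    (hf : Function.Injective f) {g : Y →ₗ[R] X₂} (hg : Function.Injective g) :
    OrthogonalMod R X Y :=
  .of_forall fun A k hk ↦
    h.subsingleton (f := f ∘ₗ A.subtype) (hf.comp A.subtype_injective)
      (g := g ∘ₗ k) (hg.comp hk)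

theorem SquareFreeMod.of_injective (h : SquareFreeMod R M) {f : N →ₗ[R] M}
    (hf : Function.Injective f) : SquareFreeMod R N :=
  .of_forall fun A k hk hd ↦ by
    refine h.subsingleton (f := f ∘ₗ A.subtype) (hf.comp A.subtype_injective)
      (g := f ∘ₗ k) (hf.comp hk) ?_
    rw [LinearMap.range_comp, LinearMap.range_comp, Submodule.range_subtype]
    exact Submodule.disjoint_map hf hd

theorem OrthogonalMod.of_forall_le {C : Submodule R X} (h : ∀ N ≤ C, ∀ g : N →ₗ[R] Y,
    Function.Injective g → N = ⊥) : OrthogonalMod R C Y :=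
  .of_forall fun A g hg ↦ by
    let e := A.equivMapOfInjective C.subtype C.subtype_injective
    have hbot := h _ (Submodule.map_subtype_le C A) (g ∘ₗ e.symm.toLinearMap)
      (hg.comp e.symm.injective)
    exact (e.subsingleton_congr).2 (Submodule.subsingleton_iff_eq_bot.2 hbot)

theorem SquareFreeMod.of_forall_le {C : Submodule R M} (h : ∀ N ≤ C, ∀ g : N →ₗ[R] M,
    Function.Injective g → LinearMap.range g ≤ C → Disjoint N (LinearMap.range g) → N = ⊥) :
    SquareFreeMod R C :=
  .of_forall fun A g hg hd ↦ by
    let e := A.equivMapOfInjective C.subtype C.subtype_injective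
    have hrange : LinearMap.range (C.subtype ∘ₗ g ∘ₗ e.symm.toLinearMap) =
        (LinearMap.range g).map C.subtype := by
      rw [LinearMap.range_comp, LinearEquiv.range_comp]
    have hbot := h _ (Submodule.map_subtype_le C A) (C.subtype ∘ₗ g ∘ₗ e.symm.toLinearMap)
      (C.subtype_injective.comp (hg.comp e.symm.injective))
      (hrange ▸ Submodule.map_subtype_le C _)
      (hrange ▸ Submodule.disjoint_map C.subtype_injective hd)
    exact (e.subsingleton_congr).2 (Submodule.subsingleton_iff_eq_bot.2 hbot)

theorem OrthogonalMod.prod (h₁ : OrthogonalMod R X₁ Y) (h₂ : OrthogonalMod R X₂ Y) :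
    OrthogonalMod R (X₁ × X₂) Y := by
  refine .of_forall fun A g hg ↦ ?_
  let s : A →ₗ[R] X₂ := LinearMap.snd R X₁ X₂ ∘ₗ A.subtype
  have hfst : Function.Injective
      (LinearMap.fst R X₁ X₂ ∘ₗ A.subtype ∘ₗ (LinearMap.ker s).subtype) :=
    fun x y hxy ↦ Subtype.ext <| Subtype.ext <| Prod.ext hxy <| x.2.trans y.2.symm
  have hker : Subsingleton (LinearMap.ker s) :=
    h₁.subsingleton hfst (g := g ∘ₗ (LinearMap.ker s).subtype)
      (hg.comp (Submodule.subtype_injective _))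
  exact h₂.subsingleton (LinearMap.ker_eq_bot.1 (Submodule.subsingleton_iff_eq_bot.1 hker)) hg

theorem SquareFreeMod.orthogonalMod_of_prod (h : SquareFreeMod R (X × Y)) :
    OrthogonalMod R X Y := by
  refine .of_forall fun A g hg ↦ h.subsingleton (f := LinearMap.inl R X Y ∘ₗ A.subtype)
    (LinearMap.inl_injective.comp A.subtype_injective) (g := LinearMap.inr R X Y ∘ₗ g)
    (LinearMap.inr_injective.comp hg) ?_
  exact LinearMap.isCompl_range_inl_inr.disjoint.mono (LinearMap.range_comp_le_range _ _)
    (LinearMap.range_comp_le_range _ _)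

end Orthogonality

section Squares

variable {R : Type u} [Ring R] {E : Type w} [AddCommGroup E] [Module R E]

/-- A partial endomorphism `f` of `E` whose domain `A` satisfies `A ⊓ f(A) = 0` and on which `f` is
injective, so that `A ⊕ f(A)` is a square in `E`. Injectivity is the case `x = 0`. -/
def IsSquareEmbedding (f : E →ₗ.[R] E) : Prop :=
  ∀ x y : f.domain, f y = x → (y : E) = 0

variable {f : E →ₗ.[R] E}

theorem IsSquareEmbedding.coprod_injective (hf : IsSquareEmbedding f) :
    Function.Injective (f.domain.subtype.coprod f.toFun) := by
  rw [← LinearMap.ker_eq_bot, LinearMap.ker_eq_bot']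
  rintro ⟨x, y⟩ hxy
  have hfy : f y = (-x : f.domain) := by
    simpa using eq_neg_of_add_eq_zero_right hxy
  obtain rfl : y = 0 := Subtype.ext (hf _ _ hfy)
  simpa using hxy

theorem IsSquareEmbedding.closedSub_domain [Module.Injective R E]
    (hf : Maximal IsSquareEmbedding f) : ClosedSub f.domain := by
  refine closedSub_domain_of_maximal hf fun P h hP hle ↦ ?_
  have hA : Disjoint f.domain (f.domain.comap h) := by
    rw [Submodule.disjoint_def]
    intro x hx hhx
    exact hf.prop ⟨h x, hhx⟩ ⟨x, hx⟩ (hle.2 (x := ⟨x, hx⟩) (y := ⟨x, hle.1 hx⟩) rfl)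
  intro x y hyx
  have hhy : h y ∈ P := (show h y = x from hyx) ▸ x.2
  exact Submodule.disjoint_def.1 (hP.disjoint_comap_self hA) y y.2 hhy

theorem IsSquareEmbedding.squareFreeMod_ker (hf : Maximal IsSquareEmbedding f)
    {ρ : E →ₗ[R] f.domain × f.domain}
    (hρ : ρ ∘ₗ f.domain.subtype.coprod f.toFun = LinearMap.id) :
    SquareFreeMod R (LinearMap.ker ρ) := by
  have hρ₁ : ∀ a : f.domain, ρ a = (a, 0) := fun a ↦ by
    simpa using LinearMap.congr_fun hρ (a, 0)
  have hρ₂ : ∀ a : f.domain, ρ (f a) = (0, a) := fun a ↦ by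
    simpa using LinearMap.congr_fun hρ (0, a)
  refine .of_forall_le fun N hN g hg hgN hd ↦ ?_
  have hdisj : Disjoint f.domain N := by
    rw [Submodule.disjoint_def]
    intro a ha haN
    simpa using congrArg Prod.fst ((hρ₁ ⟨a, ha⟩).symm.trans (hN haN))
  refine eq_bot_of_maximal hf hdisj g fun x y hyx ↦ ?_
  obtain ⟨a, n, hx, -⟩ := exists_add_eq_sup_apply hdisj g x
  obtain ⟨b, m, hy, hfy⟩ := exists_add_eq_sup_apply hdisj g y
  have heq : f b + g m = a + n := by rw [← hfy, hyx, hx]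
  have hproj : ((0, b) : f.domain × f.domain) = (a, 0) := by
    have hρm : ρ (g m) = 0 := hgN ⟨m, rfl⟩
    have hρn : ρ n = 0 := hN n.2
    simpa [hρ₁, hρ₂, hρm, hρn] using congrArg ρ heq
  obtain ⟨rfl, rfl⟩ : 0 = a ∧ b = 0 := Prod.ext_iff.1 hproj
  have hgm : g m = n := by simpa using heq
  have hm : g m = 0 := Submodule.disjoint_def.1 hd _ (hgm ▸ n.2) ⟨m, rfl⟩
  obtain rfl : m = 0 := hg (hm.trans (map_zero g).symm)
  simp [hy]

theorem exists_square_decomposition [Module.Injective R E] :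
    ∃ A C : Submodule R E, Nonempty (E ≃ₗ[R] (A × A) × C) ∧ SquareFreeMod R C := by
  obtain ⟨f, hf⟩ : ∃ f, Maximal (IsSquareEmbedding (R := R) (E := E)) f :=
    exists_maximal_linearPMap (fun x _ y fy ↦ fy = x → y = 0) fun _ ↦ rfl
  obtain ⟨_, hρ⟩ := (IsSquareEmbedding.closedSub_domain hf).exists_retraction
  have : Module.Injective R f.domain := injective_of_retract hρ
  obtain ⟨ρ, hρ⟩ := exists_leftInverse_of_injective _ hf.prop.coprod_injective
  exact ⟨f.domain, LinearMap.ker ρ, nonempty_equiv_prod_ker hρ,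
    IsSquareEmbedding.squareFreeMod_ker hf hρ⟩

end Squares

section CommonPart

variable {R : Type u} [Ring R] {U V : Type w} [AddCommGroup U] [Module R U]
  [AddCommGroup V] [Module R V] {f : U →ₗ.[R] V}

theorem closedSub_domain_of_maximal_injective [Module.Injective R V]
    (hf : Maximal (fun f : U →ₗ.[R] V ↦ Function.Injective f.toFun) f) :
    ClosedSub f.domain := by
  refine closedSub_domain_of_maximal hf fun P h hP hle ↦ ?_
  have hker : Disjoint f.domain (LinearMap.ker h) := by
    rw [Submodule.disjoint_def]
    intro x hx hhx
    exact congrArg Subtype.val <| (injective_iff_map_eq_zero f.toFun).1 hf.prop ⟨x, hx⟩ <|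
      (hle.2 (x := ⟨x, hx⟩) (y := ⟨x, hle.1 hx⟩) rfl).trans hhx
  exact (injective_iff_map_eq_zero _).2 fun x hx ↦
    Subtype.ext (Submodule.disjoint_def.1 (hP.disjoint_of_disjoint hker) x x.2 hx)

theorem orthogonalMod_of_maximal_injective (hU : SquareFreeMod R U)
    (hf : Maximal (fun f : U →ₗ.[R] V ↦ Function.Injective f.toFun) f)
    {C : Submodule R U} (hC : Disjoint f.domain C) : OrthogonalMod R C V := by
  let e := LinearEquiv.ofInjective f.toFun hf.prop
  refine .of_forall_le fun N hN g hg ↦ ?_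
  -- The part of `N` that `g` maps into `f(D)` embeds in both `D` and `N`, a square in `U`.
  let W : Submodule R N := (LinearMap.range f.toFun).comap g
  let q : W →ₗ[R] f.domain := e.symm.toLinearMap ∘ₗ g.restrict fun _ h ↦ h
  have hW : Subsingleton W := by
    refine hU.subsingleton (f := f.domain.subtype ∘ₗ q) ?_ (g := N.subtype ∘ₗ W.subtype) ?_ ?_
    · exact f.domain.subtype_injective.comp (e.symm.injective.comp fun x y hxy ↦
        Subtype.ext (hg (congrArg Subtype.val hxy)))
    · exact N.subtype_injective.comp W.subtype_injective
    · refine hC.mono ?_ ?_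
      · exact (LinearMap.range_comp_le_range _ _).trans (Submodule.range_subtype _).le
      · exact (LinearMap.range_comp_le_range _ _).trans ((Submodule.range_subtype _).le.trans hN)
  have hdisj : Disjoint f.domain N := hC.mono_right hN
  refine eq_bot_of_maximal hf hdisj g <| (injective_iff_map_eq_zero _).2 fun z hz ↦ ?_
  obtain ⟨x, n, hxn, hfz⟩ := exists_add_eq_sup_apply hdisj g z
  have hsum : f x + g n = 0 := hfz.symm.trans hz
  have hn : n ∈ W := ⟨-x, (f.toFun.map_neg x).trans (neg_eq_of_add_eq_zero_right hsum)⟩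
  obtain rfl : n = 0 := congrArg Subtype.val (Subsingleton.elim (⟨n, hn⟩ : W) 0)
  obtain rfl : x = 0 := (injective_iff_map_eq_zero f.toFun).1 hf.prop x (by simpa using hsum)
  exact Subtype.ext (by simpa using hxn)

theorem exists_equiv_prod_embedding_orthogonalMod [Module.Injective R U] [Module.Injective R V]
    (hU : SquareFreeMod R U) : ∃ D Y : Submodule R U, Nonempty (U ≃ₗ[R] D × Y) ∧
      (∃ k : D →ₗ[R] V, Function.Injective k) ∧ OrthogonalMod R Y V := by
  obtain ⟨f, hf⟩ := exists_maximal_linearPMap (R := R) (U := U) (V := V)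
    (fun x fx y fy ↦ fx = fy → x = y) fun _ ↦ rfl
  replace hf : Maximal (fun f : U →ₗ.[R] V ↦ Function.Injective f.toFun) f := by
    simp only [SetLike.coe_eq_coe] at hf
    exact hf
  obtain ⟨ρ, hρ⟩ := (closedSub_domain_of_maximal_injective hf).exists_retraction
  exact ⟨f.domain, LinearMap.ker ρ, nonempty_equiv_prod_ker hρ, ⟨f.toFun, hf.prop⟩,
    orthogonalMod_of_maximal_injective hU hf
      (LinearMap.isCompl_of_proj (LinearMap.congr_fun hρ)).disjoint⟩

end CommonPart

theorem exists_equiv_prod_squareFreeMod {R : Type u} [Ring R] {E : Type w} [AddCommGroup E]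
    [Module R E] [Module.Injective R E] :
    ∃ (A C : Submodule R E) (D Y : Submodule R C),
      Module.Injective R A ∧ Module.Injective R D ∧ Module.Injective R Y ∧
      Nonempty (E ≃ₗ[R] ((A × A) × D) × Y) ∧ (∃ k : D →ₗ[R] A, Function.Injective k) ∧
      SquareFreeMod R Y ∧ OrthogonalMod R ((A × A) × D) Y := by
  obtain ⟨A, C, ⟨e⟩, hC⟩ := exists_square_decomposition (R := R) (E := E)
  obtain ⟨hAA, hCinj⟩ := injective_of_equiv_prod e
  obtain ⟨hA, -⟩ := injective_of_equiv_prod (LinearEquiv.refl R (A × A))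
  obtain ⟨D, Y, ⟨e'⟩, hk, hYA⟩ :=
    exists_equiv_prod_embedding_orthogonalMod (R := R) (U := C) (V := A) hC
  obtain ⟨hD, hYinj⟩ := injective_of_equiv_prod e'
  have hDY : OrthogonalMod R D Y :=
    (hC.of_injective (f := e'.symm.toLinearMap) e'.symm.injective).orthogonalMod_of_prod
  exact ⟨A, C, D, Y, hA, hD, hYinj,
    ⟨e.trans (((LinearEquiv.refl R _).prodCongr e').trans (LinearEquiv.prodAssoc R _ _ _).symm)⟩,
    hk, hC.of_injective Y.subtype_injective, (hYA.symm.prod hYA.symm).prod hDY⟩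

section Invariance

variable {R : Type u} [Ring R] {E F P Q : Type*} [AddCommGroup E] [Module R E]
  [AddCommGroup F] [Module R F] [AddCommGroup P] [Module R P] [AddCommGroup Q] [Module R Q]

/-- `N` is invariant under the endomorphisms of `E` with square zero. For these, `1 + n` is an
automorphism, so every automorphism-invariant submodule has this property. -/
def IsSquareZeroInvariant (N : Submodule R E) : Prop :=
  ∀ n : E →ₗ[R] E, n ∘ₗ n = 0 → N ≤ N.comap n

/-- `N` is invariant under the endomorphisms of `E` that factor through `ι : P → E`. -/
def IsFactorInvariant (N : Submodule R E) (ι : P →ₗ[R] E) : Prop :=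
  ∀ h : E →ₗ[R] P, N ≤ N.comap (ι ∘ₗ h)

theorem HullAutInv.isSquareZeroInvariant {M : Type v} [AddCommGroup M] [Module R M]
    {i : M →ₗ[R] E} (hi : HullAutInv i) : IsSquareZeroInvariant (LinearMap.range i) := by
  rintro n hn _ ⟨m, rfl⟩
  have hn' : ∀ x, n (n x) = 0 := LinearMap.congr_fun hn
  let g : E ≃ₗ[R] E := .ofLinearMap (LinearMap.id + n) (LinearMap.id - n)
    (by ext x; simp [hn']) (by ext x; simp [hn'])
  have hg : g (i m) = i m + n (i m) := rfl
  have hmem := Submodule.sub_mem _ (hi g m) (LinearMap.mem_range_self i m)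
  rwa [hg, add_sub_cancel_left] at hmem

variable {N : Submodule R E}

theorem IsSquareZeroInvariant.map (hN : IsSquareZeroInvariant N) (e : E ≃ₗ[R] F) :
    IsSquareZeroInvariant (N.map e.toLinearMap) := by
  rintro n hn _ ⟨x, hx, rfl⟩
  have hconj := hN (e.symm.toLinearMap ∘ₗ n ∘ₗ e.toLinearMap)
    (by ext x; simpa using LinearMap.congr_fun hn (e x)) hx
  exact ⟨_, hconj, by simp⟩

theorem IsSquareZeroInvariant.le_comap_comp (hN : IsSquareZeroInvariant N) {a : P →ₗ[R] E}
    {b : E →ₗ[R] P} (hba : b ∘ₗ a = 0) : N ≤ N.comap (a ∘ₗ b) :=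
  hN _ <| LinearMap.ext fun x ↦ by simpa using congrArg a (LinearMap.congr_fun hba (b x))

theorem IsFactorInvariant.prod {ι : P × Q →ₗ[R] E}
    (hP : IsFactorInvariant N (ι ∘ₗ LinearMap.inl R P Q))
    (hQ : IsFactorInvariant N (ι ∘ₗ LinearMap.inr R P Q)) : IsFactorInvariant N ι := by
  intro h x hx
  have hsum := N.add_mem (hP (LinearMap.fst R P Q ∘ₗ h) hx) (hQ (LinearMap.snd R P Q ∘ₗ h) hx)
  simpa [← map_add] using hsum

theorem IsSquareZeroInvariant.isFactorInvariant {E P : Type w} [AddCommGroup E] [Module R E]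
    [AddCommGroup P] [Module R P] [Module.Injective R P] {N : Submodule R E}
    (hN : IsSquareZeroInvariant N) {ι f : P →ₗ[R] E} {ρ : E →ₗ[R] P}
    (hι : ρ ∘ₗ ι = LinearMap.id) (hf : Function.Injective f) (hρf : ρ ∘ₗ f = 0) :
    IsFactorInvariant N ι := by
  have hρι : ∀ p, ρ (ι p) = p := LinearMap.congr_fun hι
  have hρf' : ∀ p, ρ (f p) = 0 := LinearMap.congr_fun hρf
  obtain ⟨g₀, hg₀⟩ := exists_leftInverse_of_injective f hf
  let π : E →ₗ[R] E := LinearMap.id - ι ∘ₗ ρ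
  let g : E →ₗ[R] P := g₀ ∘ₗ π
  have hgf : ∀ p, g (f p) = p := fun p ↦ by
    simpa [g, π, hρf'] using LinearMap.congr_fun hg₀ p
  intro h x hx
  -- Off `ι(P)` the map `ι h` has square zero; on `ι(P)` it is routed through the copy `f(P)`.
  have hoff : ι (h (π x)) ∈ N :=
    hN.le_comap_comp (a := ι) (b := h ∘ₗ π) (by ext p; simp [π, hρι]) hx
  have hcopy : f (h (ι (ρ x))) ∈ N :=
    hN.le_comap_comp (a := f) (b := h ∘ₗ ι ∘ₗ ρ) (by ext p; simp [hρf']) hx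
  have hdiag : ι (g (f (h (ι (ρ x))))) ∈ N :=
    hN.le_comap_comp (a := ι) (b := g) (by ext p; simp [g, π, hρι]) hcopy
  rw [hgf] at hdiag
  simpa [π] using N.add_mem hoff hdiag

theorem IsSquareZeroInvariant.isFactorInvariant_inl {A D Y : Type w} [AddCommGroup A] [Module R A]
    [AddCommGroup D] [Module R D] [AddCommGroup Y] [Module R Y] [Module.Injective R A]
    [Module.Injective R D] {N : Submodule R (((A × A) × D) × Y)} (hN : IsSquareZeroInvariant N)
    {k : D →ₗ[R] A} (hk : Function.Injective k) :
    IsFactorInvariant N (LinearMap.inl R ((A × A) × D) Y) := by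
  let fst : ((A × A) × D) × Y →ₗ[R] (A × A) × D := LinearMap.fst R _ _
  let inl : (A × A) × D →ₗ[R] ((A × A) × D) × Y := LinearMap.inl R _ _
  let inlA : A × A →ₗ[R] ((A × A) × D) × Y := inl ∘ₗ LinearMap.inl R _ _
  let fstA : ((A × A) × D) × Y →ₗ[R] A × A := LinearMap.fst R _ _ ∘ₗ fst
  have hinl : Function.Injective inlA := LinearMap.inl_injective.comp LinearMap.inl_injective
  refine .prod (.prod ?_ ?_) ?_
  · exact hN.isFactorInvariant (f := inlA ∘ₗ LinearMap.inr R A A)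
      (ρ := LinearMap.fst R A A ∘ₗ fstA) rfl (hinl.comp LinearMap.inr_injective) rfl
  · exact hN.isFactorInvariant (f := inlA ∘ₗ LinearMap.inl R A A)
      (ρ := LinearMap.snd R A A ∘ₗ fstA) rfl (hinl.comp LinearMap.inl_injective) rfl
  · exact hN.isFactorInvariant (f := inlA ∘ₗ LinearMap.inl R A A ∘ₗ k)
      (ρ := LinearMap.snd R (A × A) D ∘ₗ fst) rfl
      ((hinl.comp LinearMap.inl_injective).comp hk) rfl

end Invariance

section Transfer

variable {R : Type u} [Ring R] {M : Type v} [AddCommGroup M] [Module R M]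
  {E P X Y : Type w} [AddCommGroup E] [Module R E] [AddCommGroup P] [Module R P]
  [AddCommGroup X] [Module R X] [AddCommGroup Y] [Module R Y]

theorem exists_injective_comap_range {i : M →ₗ[R] E} (hi : Function.Injective i) {ι : P →ₗ[R] E}
    (hι : Function.Injective ι) : ∃ φ : (LinearMap.range ι).comap i →ₗ[R] P,
      Function.Injective φ ∧ ∀ m, ι (φ m) = i m := by
  let e := LinearEquiv.ofInjective ι hι
  let r : (LinearMap.range ι).comap i →ₗ[R] LinearMap.range ι := i.restrict fun _ hm ↦ hm
  have hφ : ∀ m, ι (e.symm (r m)) = i m := fun m ↦ congrArg Subtype.val (e.apply_symm_apply (r m))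
  refine ⟨e.symm.toLinearMap ∘ₗ r, fun a b hab ↦ Subtype.ext (hi ?_), hφ⟩
  rw [← hφ a, ← hφ b]
  exact congrArg ι hab

theorem RelInjective.comap_range [Module.Injective R P] {i : M →ₗ[R] E}
    (hi : Function.Injective i) {ι : P →ₗ[R] E} (hι : Function.Injective ι) {L : Submodule R M}
    (hL : ∀ (h : E →ₗ[R] P), ∀ m ∈ L, ι (h (i m)) ∈ LinearMap.range i) :
    RelInjective R ((LinearMap.range ι).comap i) L := by
  intro A f
  obtain ⟨φ, -, hφ⟩ := exists_injective_comap_range hi hι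
  obtain ⟨h, hh⟩ := exists_extension_of_injective (i ∘ₗ L.subtype ∘ₗ A.subtype)
    (hi.comp (L.subtype_injective.comp A.subtype_injective)) (φ ∘ₗ f)
  let e := LinearEquiv.ofInjective i hi
  let q : L →ₗ[R] LinearMap.range i :=
    (ι ∘ₗ h ∘ₗ i ∘ₗ L.subtype).codRestrict _ fun l ↦ hL h l l.2
  have hq : ∀ l, i (e.symm (q l)) = ι (h (i l)) := fun l ↦
    congrArg Subtype.val (e.apply_symm_apply (q l))
  refine ⟨(e.symm.toLinearMap ∘ₗ q).codRestrict _ fun l ↦ ⟨_, (hq l).symm⟩, fun a ↦ ?_⟩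
  refine Subtype.ext (hi ?_)
  calc i (e.symm (q a)) = ι (h (i a)) := hq a
    _ = ι (φ (f a)) := congrArg ι (hh a)
    _ = i (f a) := hφ (f a)

theorem isCompl_comap_range_inl_inr {i : M →ₗ[R] X × Y} (hi : Function.Injective i)
    (hX : IsFactorInvariant (LinearMap.range i) (LinearMap.inl R X Y)) :
    IsCompl ((LinearMap.range (LinearMap.inl R X Y)).comap i)
      ((LinearMap.range (LinearMap.inr R X Y)).comap i) := by
  constructor
  · rw [disjoint_iff, ← Submodule.comap_inf, LinearMap.isCompl_range_inl_inr.inf_eq_bot,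
      Submodule.comap_bot, LinearMap.ker_eq_bot.2 hi]
  · rw [codisjoint_iff, eq_top_iff]
    intro m _
    obtain ⟨a, ha⟩ := hX (LinearMap.fst R X Y) ⟨m, rfl⟩
    refine Submodule.mem_sup.2 ⟨a, ⟨_, ha.symm⟩, m - a, ⟨(i m).2, ?_⟩, add_sub_cancel _ _⟩
    rw [map_sub, ha]
    ext <;> simp

theorem exists_decomposition_of_isFactorInvariant_inl [Module.Injective R X] [Module.Injective R Y]
    {i : M →ₗ[R] X × Y} (hi : Function.Injective i)
    (hN : IsSquareZeroInvariant (LinearMap.range i))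
    (hX : IsFactorInvariant (LinearMap.range i) (LinearMap.inl R X Y))
    (hXY : OrthogonalMod R X Y) (hY : SquareFreeMod R Y) :
    ∃ X' Y' : Submodule R M, IsCompl X' Y' ∧ QuasiInjective R X' ∧ SquareFreeMod R Y' ∧
      OrthogonalMod R X' Y' ∧ RelInjective R X' Y' ∧ RelInjective R Y' X' := by
  have hX' (L : Submodule R M) :
      RelInjective R ((LinearMap.range (LinearMap.inl R X Y)).comap i) L :=
    .comap_range hi LinearMap.inl_injective fun h m _ ↦ hX h ⟨m, rfl⟩
  obtain ⟨φ, hφ, -⟩ := exists_injective_comap_range hi (LinearMap.inl_injective (R := R) (M₂ := Y))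
  obtain ⟨ψ, hψ, -⟩ := exists_injective_comap_range hi (LinearMap.inr_injective (R := R) (M := X))
  refine ⟨_, _, isCompl_comap_range_inl_inr hi hX, hX' _, hY.of_injective hψ,
    hXY.of_injective hφ hψ, hX' _, .comap_range hi LinearMap.inr_injective ?_⟩
  rintro h m ⟨x, hx⟩
  have hmem := hN.le_comap_comp (a := LinearMap.inr R X Y)
    (b := h ∘ₗ LinearMap.inl R X Y ∘ₗ LinearMap.fst R X Y)
    (LinearMap.ext fun _ ↦ map_zero h) ⟨m, rfl⟩
  simpa [← hx] using hmem

end Transfer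

theorem autInvariant_decomposition_general {R : Type u} [Ring R] {M : Type v} {E : Type w}
    [AddCommGroup M] [Module R M] [AddCommGroup E] [Module R E] [Module.Injective R E]
    (i : M →ₗ[R] E) (hi : Function.Injective i)
    (hinv : IsSquareZeroInvariant (LinearMap.range i)) :
    ∃ X Y : Submodule R M, IsCompl X Y ∧ QuasiInjective R X ∧ SquareFreeMod R Y ∧
      OrthogonalMod R X Y ∧ RelInjective R X Y ∧ RelInjective R Y X := by
  obtain ⟨A, C, D, Y, hA, hD, hYinj, ⟨e⟩, ⟨k, hk⟩, hY, hXY⟩ :=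
    exists_equiv_prod_squareFreeMod (R := R) (E := E)
  have hN : IsSquareZeroInvariant (LinearMap.range (e.toLinearMap ∘ₗ i)) := by
    rw [LinearMap.range_comp]
    exact hinv.map e
  exact exists_decomposition_of_isFactorInvariant_inl (e.injective.comp hi) hN
    (hN.isFactorInvariant_inl hk) hXY hY

/-- every automorphism-invariant module decomposes as `M = X ⊕ Y` with `X`
quasi-injective, `Y` square-free, `X` and `Y` orthogonal and relatively injective. -/
theorem autInvariant_decomposition {R : Type u} [Ring R]
    {M : Type v} {E : Type w} [AddCommGroup M] [Module R M] [AddCommGroup E] [Module R E]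
    (i : M →ₗ[R] E) (hhull : IsInjectiveHull i) (hinv : HullAutInv i) :
    ∃ X Y : Submodule R M, IsCompl X Y ∧ QuasiInjective R ↥X ∧ SquareFreeMod R ↥Y ∧
      OrthogonalMod R ↥X ↥Y ∧ RelInjective R ↥X ↥Y ∧ RelInjective R ↥Y ↥X := by
  have := hhull.injE
  exact autInvariant_decomposition_general i hhull.inj hinv.isSquareZeroInvariant
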